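/- arXiv:1509.02098 — 3 statements merged into one kernel-verified Lean document; each statement's English description precedes it below -/
import Mathlib

section
/- Define g : ℝ → ℝ by g(s) = (1/2)(e^{−s} cos(s − π/4) − e^{s} cos(s + π/4)). Let 0 < a < b and t₀ > 0. Then there exists C₀ > 0 such that ∫_{at}^{bt} g(s)² ds ≥ C₀ for all t ≥ t₀. -/
/-- `g(s) = (1/2)(e^{−s} cos(s − π/4) − e^{s} cos(s + π/4))`. -/
noncomputable def gfun (s : ℝ) : ℝ :=
  (1 / 2) * (Real.exp (-s) * Real.cos (s - Real.pi / 4) -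
    Real.exp s * Real.cos (s + Real.pi / 4))

/-!
Fix a window length `L > 0`. The function `x ↦ ∫ s in x..x + L, g(s)²` is continuous, and it is
positive everywhere because `g` is analytic and not identically zero. As `x → ∞` it grows like
`e^{2x}`: the term `e^s cos(s + π/4)` dominates, and the integral of `cos²` over a window of
length `L` is at least `(L - |sin L|) / 2 > 0`. Since `g` is odd, it also tends to infinity as
`x → -∞`. Hence it attains a positive global minimum, and `[at, bt]` contains a window of length
`(b - a) t₀` as soon as `t ≥ t₀`.
-/

open Filter Real Set

theorem continuous_integral_add_const {E : Type*} [NormedAddCommGroup E] [NormedSpace ℝ E]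
    {f : ℝ → E} (hf : Continuous f) (L : ℝ) : Continuous fun x ↦ ∫ s in x..x + L, f s := by
  have integral_eq (x : ℝ) : ∫ s in x..x + L, f s = ∫ s in 0..L, f (x + s) := by simp
  simp only [integral_eq]
  exact intervalIntegral.continuous_parametric_intervalIntegral_of_continuous' (by fun_prop) 0 L

theorem integral_sq_pos_of_analyticOnNhd {f : ℝ → ℝ} (hf : AnalyticOnNhd ℝ f univ) (hf₀ : f ≠ 0)
    {a b : ℝ} (hab : a < b) : 0 < ∫ s in a..b, f s ^ 2 := by
  obtain ⟨c, hc, hfc⟩ : ∃ c ∈ Ioo a b, f c ≠ 0 := by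
    by_contra! hzero
    obtain ⟨m, hm⟩ := exists_between hab
    exact hf₀ <| hf.eq_of_eventuallyEq analyticOnNhd_const <|
      eventually_of_mem (Ioo_mem_nhds hm.1 hm.2) hzero
  have hf_cont : ContinuousOn f (Icc a b) := hf.continuousOn.mono (subset_univ _)
  exact intervalIntegral.integral_pos hab (hf_cont.pow 2) (fun _ _ ↦ sq_nonneg _)
    ⟨c, Ioo_subset_Icc_self hc, by positivity⟩

theorem cos_mul_sin_sub_cos_mul_sin (a b : ℝ) :
    cos b * sin b - cos a * sin a = sin (b - a) * cos (a + b) := by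
  rw [sin_sub, cos_add]
  linear_combination cos a * sin a * sin_sq_add_cos_sq b - cos b * sin b * sin_sq_add_cos_sq a

theorem sub_abs_sin_sub_div_two_le_integral_cos_sq (a b : ℝ) :
    (b - a - |sin (b - a)|) / 2 ≤ ∫ s in a..b, cos s ^ 2 := by
  have boundary_le : |sin (b - a) * cos (a + b)| ≤ |sin (b - a)| := by
    rw [abs_mul]
    exact mul_le_of_le_one_right (abs_nonneg _) (abs_cos_le_one _)
  rw [integral_cos_sq, cos_mul_sin_sub_cos_mul_sin]
  linarith [neg_le_of_abs_le boundary_le]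

theorem gfun_neg (s : ℝ) : gfun (-s) = -gfun s := by
  have cos_neg_sub : cos (-s - π / 4) = cos (s + π / 4) := by rw [← cos_neg]; ring_nf
  have cos_neg_add : cos (-s + π / 4) = cos (s - π / 4) := by rw [← cos_neg]; ring_nf
  rw [gfun, gfun, cos_neg_sub, cos_neg_add, neg_neg]
  ring

theorem analyticOnNhd_gfun : AnalyticOnNhd ℝ gfun univ := by
  intro s _
  unfold gfun
  fun_prop

theorem continuous_gfun : Continuous gfun :=
  continuousOn_univ.1 analyticOnNhd_gfun.continuousOn

theorem gfun_ne_zero : gfun ≠ 0 := by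
  have gfun_pi_div_four : gfun (π / 4) = exp (-(π / 4)) / 2 := by
    rw [gfun, sub_self, cos_zero, show π / 4 + π / 4 = π / 2 by ring, cos_pi_div_two]
    ring
  have value_ne_zero : exp (-(π / 4)) / 2 ≠ 0 := by positivity
  intro h
  exact value_ne_zero (by rw [← gfun_pi_div_four, h, Pi.zero_apply])

theorem exp_mul_cos_sq_sub_le_gfun_sq {s : ℝ} (hs : 0 ≤ s) :
    exp (2 * s) / 8 * cos (s + π / 4) ^ 2 - 1 / 4 ≤ gfun s ^ 2 := by
  have decaying_sq_le_one : (exp (-s) * cos (s - π / 4)) ^ 2 ≤ 1 := by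
    rw [mul_pow]
    exact mul_le_one₀ (pow_le_one₀ (exp_pos _).le (exp_le_one_iff.2 (neg_nonpos.2 hs)))
      (sq_nonneg _) (cos_sq_le_one _)
  have exp_two_mul : exp (2 * s) = exp s ^ 2 := by rw [← exp_nat_mul, Nat.cast_ofNat]
  rw [exp_two_mul, gfun]
  -- `(p - q)² ≥ q² / 2 - p²`, because `(2 p - q)² ≥ 0`
  linarith [sq_nonneg (2 * (exp (-s) * cos (s - π / 4)) - exp s * cos (s + π / 4))]

theorem exp_mul_sub_le_integral_gfun_sq {x L : ℝ} (hx : 0 ≤ x) (hL : 0 ≤ L) :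
    exp (2 * x) / 8 * ((L - |sin L|) / 2) - L / 4 ≤ ∫ s in x..x + L, gfun s ^ 2 := by
  have cos_sq_lower : (L - |sin L|) / 2 ≤ ∫ s in x..x + L, cos (s + π / 4) ^ 2 := by
    rw [intervalIntegral.integral_comp_add_right (fun s ↦ cos s ^ 2)]
    convert sub_abs_sin_sub_div_two_le_integral_cos_sq (x + π / 4) (x + L + π / 4) using 1
    ring_nf
  calc
    exp (2 * x) / 8 * ((L - |sin L|) / 2) - L / 4
      ≤ exp (2 * x) / 8 * (∫ s in x..x + L, cos (s + π / 4) ^ 2) - L / 4 := by gcongr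
    _ = ∫ s in x..x + L, (exp (2 * x) / 8 * cos (s + π / 4) ^ 2 - 1 / 4) := by
      rw [intervalIntegral.integral_sub (Continuous.intervalIntegrable (by fun_prop) _ _)
        intervalIntegrable_const, intervalIntegral.integral_const_mul,
        intervalIntegral.integral_const, add_sub_cancel_left, smul_eq_mul, mul_one_div]
    _ ≤ ∫ s in x..x + L, gfun s ^ 2 := by
      refine intervalIntegral.integral_mono_on (by linarith)
        (Continuous.intervalIntegrable (by fun_prop) _ _)
        ((continuous_gfun.pow 2).intervalIntegrable _ _) fun s hs ↦ ?_
      refine le_trans ?_ (exp_mul_cos_sq_sub_le_gfun_sq (hx.trans hs.1))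
      gcongr
      exact hs.1

theorem tendsto_integral_gfun_sq_atTop {L : ℝ} (hL : 0 < L) :
    Tendsto (fun x ↦ ∫ s in x..x + L, gfun s ^ 2) atTop atTop := by
  have sin_gap_pos : 0 < (L - |sin L|) / 2 := by
    have := abs_sin_lt_abs hL.ne'
    rw [abs_of_pos hL] at this
    linarith
  have exp_tendsto : Tendsto (fun x ↦ exp (2 * x)) atTop atTop :=
    tendsto_exp_atTop.comp (tendsto_id.const_mul_atTop two_pos)
  have lower_tendsto :
      Tendsto (fun x ↦ exp (2 * x) / 8 * ((L - |sin L|) / 2) - L / 4) atTop atTop :=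
    tendsto_atTop_add_const_right _ _ <|
      (exp_tendsto.atTop_div_const (by norm_num)).atTop_mul_const sin_gap_pos
  refine tendsto_atTop_mono' _ ?_ lower_tendsto
  filter_upwards [eventually_ge_atTop 0] with x hx
  exact exp_mul_sub_le_integral_gfun_sq hx hL.le

theorem integral_gfun_sq_neg_neg (a b : ℝ) :
    ∫ s in -b..-a, gfun s ^ 2 = ∫ s in a..b, gfun s ^ 2 := by
  rw [← intervalIntegral.integral_comp_neg]
  simp only [gfun_neg, neg_sq]

theorem tendsto_integral_gfun_sq_cocompact {L : ℝ} (hL : 0 < L) :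
    Tendsto (fun x ↦ ∫ s in x..x + L, gfun s ^ 2) (cocompact ℝ) atTop := by
  rw [cocompact_eq_atBot_atTop, tendsto_sup]
  refine ⟨?_, tendsto_integral_gfun_sq_atTop hL⟩
  have reflect_tendsto : Tendsto (fun x : ℝ ↦ -(x + L)) atBot atTop :=
    tendsto_neg_atBot_atTop.comp (tendsto_atBot_add_const_right _ L tendsto_id)
  refine ((tendsto_integral_gfun_sq_atTop hL).comp reflect_tendsto).congr fun x ↦ ?_
  rw [← integral_gfun_sq_neg_neg x (x + L), Function.comp_apply]
  ring_nf

theorem exists_pos_forall_le_integral_gfun_sq {L : ℝ} (hL : 0 < L) :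
    ∃ C > 0, ∀ x, C ≤ ∫ s in x..x + L, gfun s ^ 2 := by
  obtain ⟨x₀, hx₀⟩ := (continuous_integral_add_const (continuous_gfun.pow 2) L).exists_forall_le
    (tendsto_integral_gfun_sq_cocompact hL)
  exact ⟨_, integral_sq_pos_of_analyticOnNhd analyticOnNhd_gfun gfun_ne_zero (by linarith), hx₀⟩

theorem stmt15_general (a b t₀ : ℝ) (hab : a < b) (ht₀ : 0 < t₀) :
    ∃ C₀ > 0, ∀ t : ℝ, t₀ ≤ t → C₀ ≤ ∫ s in (a * t)..(b * t), (gfun s) ^ 2 := by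
  have window_pos : 0 < (b - a) * t₀ := mul_pos (sub_pos.2 hab) ht₀
  obtain ⟨C, hC, hC_le⟩ := exists_pos_forall_le_integral_gfun_sq window_pos
  refine ⟨C, hC, fun t ht ↦ (hC_le (a * t)).trans ?_⟩
  have window_le : a * t + (b - a) * t₀ ≤ b * t := by
    linarith [mul_le_mul_of_nonneg_left ht (sub_nonneg.2 hab.le)]
  exact intervalIntegral.integral_mono_interval le_rfl (by linarith) window_le
    (Eventually.of_forall fun _ ↦ sq_nonneg _) ((continuous_gfun.pow 2).intervalIntegrable _ _)

/-- For `0 < a < b` and `t₀ > 0`, the integrals `∫_{at}^{bt} g(s)² ds` are uniformly bounded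
below by a positive constant for `t ≥ t₀`. -/
theorem stmt15 (a b t₀ : ℝ) (ha : 0 < a) (hab : a < b) (ht₀ : 0 < t₀) :
    ∃ C₀ > 0, ∀ t : ℝ, t₀ ≤ t → C₀ ≤ ∫ s in (a * t)..(b * t), (gfun s) ^ 2 :=
  stmt15_general a b t₀ hab ht₀
end

section
/- Let ψ ∈ C^∞(ℝ^N; ℝ) have all its partial derivatives of every order ≥ 1 bounded on ℝ^N. Write z = (z', z_N) ∈ ℝ^{N−1} × ℝ and, for parameters τ ≥ 1, γ ≥ 1, ε ∈ [0,1], set τ̃(z) := τ γ exp(γ ψ(ε z', z_N)). Then for every multi-index α = (α', α_N) ∈ ℕ^{N−1} × ℕ there exists C_α > 0, independent of τ, γ and ε, such that |∂_z^α τ̃(z)| ≤ C_α γ^{α_N} (1 + εγ)^{|α'|} τ̃(z) for all z ∈ ℝ^N, τ ≥ 1, γ ≥ 1, ε ∈ [0,1]. (This expresses that τ̃ = τγφ_{γ,ε} is a symbol of order (0;1) for the three-parameter Weyl–Hörmander metrics g and g_T of the paper.) -/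
/-- Directional derivative of a real-valued function on `ℝ^{N−1} × ℝ`. -/
noncomputable def pdv {n : ℕ} (v : (Fin n → ℝ) × ℝ) (f : ((Fin n → ℝ) × ℝ) → ℝ) :
    ((Fin n → ℝ) × ℝ) → ℝ :=
  fun z => fderiv ℝ f z v

/-- Iterated multi-index partial derivative `∂_z^α = ∂_{z'}^{α'} ∂_{z_N}^{α_N}`. -/
noncomputable def mdv {n : ℕ} (α' : Fin n → ℕ) (αN : ℕ) (f : ((Fin n → ℝ) × ℝ) → ℝ) :
    ((Fin n → ℝ) × ℝ) → ℝ :=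
  (pdv ((0 : Fin n → ℝ), (1 : ℝ)))^[αN]
    ((List.finRange n).foldr (fun j g => (pdv (Pi.single j 1, (0 : ℝ)))^[α' j] g) f)

/-!
If `S` denotes the dilation `(z', z_N) ↦ (ε z', z_N)`, then `τ̃ = G ∘ S` with
`G = τ γ exp (γ ψ)`. By Faà di Bruno's formula the `k`-th derivative of `G` is `O(γ ^ k) G`: it
is a sum of products of at most `k` derivatives of `γ ψ`, and `γ ≥ 1`. The chain rule for the
linear map `S` then yields one factor `ε` for every derivative in a direction of `z'`, so that in
fact `|∂^α τ̃| ≤ C γ ^ α_N (ε γ) ^ |α'| τ̃`.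
-/

open scoped Nat

theorem exists_one_le_uniform_bound {ι X : Type*} (s : Finset ι) {f : ι → X → ℝ}
    (hf : ∀ i ∈ s, ∃ M, ∀ x, f i x ≤ M) : ∃ M, 1 ≤ M ∧ ∀ i ∈ s, ∀ x, f i x ≤ M := by
  have eventually_bound : ∀ᶠ M in Filter.atTop, ∀ i ∈ s, ∀ x, f i x ≤ M := by
    refine (Filter.eventually_all_finset s).2 fun i hi => ?_
    obtain ⟨M, hM⟩ := hf i hi
    filter_upwards [Filter.eventually_ge_atTop M] with B hB x using (hM x).trans hB
  exact ((Filter.eventually_ge_atTop 1).and eventually_bound).exists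

theorem norm_iteratedFDeriv_const_mul {𝕜 E : Type*} [NontriviallyNormedField 𝕜]
    [NormedAddCommGroup E] [NormedSpace 𝕜 E] {k : ℕ} {f : E → 𝕜} {x : E} (c : 𝕜)
    (hf : ContDiffAt 𝕜 k f x) :
    ‖iteratedFDeriv 𝕜 k (fun y => c * f y) x‖ = ‖c‖ * ‖iteratedFDeriv 𝕜 k f x‖ := by
  rw [← norm_smul, ← iteratedFDeriv_const_smul_apply hf]
  rfl

section Exponential

variable {E : Type*} [NormedAddCommGroup E] [NormedSpace ℝ E] {k : ℕ}

theorem norm_iteratedFDeriv_real_exp (i : ℕ) (t : ℝ) :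
    ‖iteratedFDeriv ℝ i Real.exp t‖ = Real.exp t := by
  rw [norm_iteratedFDeriv_eq_norm_iteratedDeriv, iteratedDeriv_eq_iterate, Real.iter_deriv_exp,
    Real.norm_eq_abs, Real.abs_exp]

theorem norm_iteratedFDeriv_exp_comp_le {f : E → ℝ} (hf : ContDiff ℝ k f) {x : E} {D : ℝ}
    (hD : ∀ i, 1 ≤ i → i ≤ k → ‖iteratedFDeriv ℝ i f x‖ ≤ D ^ i) :
    ‖iteratedFDeriv ℝ k (fun y => Real.exp (f y)) x‖ ≤ k ! * Real.exp (f x) * D ^ k :=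
  norm_iteratedFDeriv_comp_le Real.contDiff_exp hf le_rfl x
    (fun i _ => (norm_iteratedFDeriv_real_exp i (f x)).le) hD

theorem exists_norm_iteratedFDeriv_const_mul_exp_le {ψ : E → ℝ} (hψ : ContDiff ℝ k ψ)
    (hbdd : ∀ i, 1 ≤ i → i ≤ k → ∃ M : ℝ, ∀ x, ‖iteratedFDeriv ℝ i ψ x‖ ≤ M) :
    ∃ C > 0, ∀ c γ : ℝ, 1 ≤ γ → ∀ x,
      ‖iteratedFDeriv ℝ k (fun y => c * Real.exp (γ * ψ y)) x‖ ≤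
        C * γ ^ k * |c * Real.exp (γ * ψ x)| := by
  obtain ⟨M, one_le_M, hM⟩ := exists_one_le_uniform_bound (Finset.Icc 1 k) fun i hi =>
    hbdd i (Finset.mem_Icc.1 hi).1 (Finset.mem_Icc.1 hi).2
  refine ⟨k ! * M ^ k, by positivity, fun c γ hγ x => ?_⟩
  have hγψ : ContDiff ℝ k (fun y => γ * ψ y) := contDiff_const.mul hψ
  have hD (i : ℕ) (h₁ : 1 ≤ i) (hi : i ≤ k) :
      ‖iteratedFDeriv ℝ i (fun y => γ * ψ y) x‖ ≤ (γ * M) ^ i := by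
    have hψi : ContDiffAt ℝ i ψ x := (hψ.of_le (by exact_mod_cast hi)).contDiffAt
    calc ‖iteratedFDeriv ℝ i (fun y => γ * ψ y) x‖
        = γ * ‖iteratedFDeriv ℝ i ψ x‖ := by
          rw [norm_iteratedFDeriv_const_mul γ hψi, Real.norm_of_nonneg (by positivity)]
      _ ≤ γ * M := by gcongr; exact hM i (Finset.mem_Icc.2 ⟨h₁, hi⟩) x
      _ ≤ (γ * M) ^ i := le_self_pow₀ (one_le_mul_of_one_le_of_one_le hγ one_le_M) (by lia)
  calc ‖iteratedFDeriv ℝ k (fun y => c * Real.exp (γ * ψ y)) x‖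
      = |c| * ‖iteratedFDeriv ℝ k (fun y => Real.exp (γ * ψ y)) x‖ := by
        rw [norm_iteratedFDeriv_const_mul c hγψ.exp.contDiffAt, Real.norm_eq_abs]
    _ ≤ |c| * (k ! * Real.exp (γ * ψ x) * (γ * M) ^ k) := by
        gcongr
        exact norm_iteratedFDeriv_exp_comp_le hγψ hD
    _ = k ! * M ^ k * γ ^ k * |c * Real.exp (γ * ψ x)| := by
        rw [abs_mul, Real.abs_exp, mul_pow]
        ring

end Exponential

section DirectionalDerivatives

variable {𝕜 E F G : Type*} [NontriviallyNormedField 𝕜]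
  [NormedAddCommGroup E] [NormedSpace 𝕜 E] [NormedAddCommGroup F] [NormedSpace 𝕜 F]
  [NormedAddCommGroup G] [NormedSpace 𝕜 G]

variable (𝕜) in
/-- The iterated directional derivative `∂_{v₁} ⋯ ∂_{vₖ} f` along a list `[v₁, …, vₖ]` of
directions; the last direction of the list is differentiated first. -/
noncomputable def iteratedDirDeriv (l : List E) (f : E → F) : E → F :=
  l.foldr (fun v g x => fderiv 𝕜 g x v) f

theorem iteratedDirDeriv_eq_iteratedFDeriv (l : List E) {f : E → F}
    (hf : ContDiff 𝕜 l.length f) (x : E) :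
    iteratedDirDeriv 𝕜 l f x = iteratedFDeriv 𝕜 l.length f x l.get := by
  induction l generalizing x with
  | nil => rfl
  | cons v l ih =>
    have hlt : (l.length : WithTop ℕ∞) < (v :: l).length := by
      exact_mod_cast l.length.lt_succ_self
    have ih_fun : iteratedDirDeriv 𝕜 l f = fun y => iteratedFDeriv 𝕜 l.length f y l.get :=
      funext (ih (hf.of_le hlt.le))
    calc iteratedDirDeriv 𝕜 (v :: l) f x
        = fderiv 𝕜 (iteratedDirDeriv 𝕜 l f) x v := rfl
      _ = fderiv 𝕜 (iteratedFDeriv 𝕜 l.length f) x v l.get := by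
        rw [ih_fun, fderiv_continuousMultilinear_apply_const_apply
          (hf.differentiable_iteratedFDeriv hlt x)]
      _ = iteratedFDeriv 𝕜 (v :: l).length f x (v :: l).get :=
        (iteratedFDeriv_succ_apply_left (v :: l).get).symm

theorem norm_iteratedDirDeriv_comp_clm_le (l : List E) (L : E →L[𝕜] F) {g : F → G}
    (hg : ContDiff 𝕜 l.length g) (x : E) :
    ‖iteratedDirDeriv 𝕜 l (fun y => g (L y)) x‖ ≤
      ‖iteratedFDeriv 𝕜 l.length g (L x)‖ * (l.map fun v => ‖L v‖).prod := by
  have hgL : ContDiff 𝕜 l.length (fun y => g (L y)) := hg.comp L.contDiff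
  have h_comp : iteratedFDeriv 𝕜 l.length (fun y => g (L y)) x =
      (iteratedFDeriv 𝕜 l.length g (L x)).compContinuousLinearMap fun _ => L :=
    L.iteratedFDeriv_comp_right hg x le_rfl
  rw [iteratedDirDeriv_eq_iteratedFDeriv l hgL, h_comp, ← Fin.prod_univ_fun_getElem]
  exact (iteratedFDeriv 𝕜 l.length g (L x)).le_opNorm fun i => L (l.get i)

end DirectionalDerivatives

section MultiIndex

variable {n : ℕ}

/-- The coordinate directions in which `mdv α' αN` differentiates, listed with multiplicity. -/
def multiIndexDirections (α' : Fin n → ℕ) (αN : ℕ) : List ((Fin n → ℝ) × ℝ) :=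
  List.replicate αN (0, 1) ++
    (List.finRange n).flatMap fun j => List.replicate (α' j) (Pi.single j 1, 0)

theorem foldr_replicate_eq_iterate {α β : Type*} (f : α → β → β) (a : α) (k : ℕ) (b : β) :
    (List.replicate k a).foldr f b = (f a)^[k] b := by
  induction k with
  | zero => rfl
  | succ k ih => rw [List.replicate_succ, List.foldr_cons, ih, Function.iterate_succ_apply']

theorem mdv_eq_iteratedDirDeriv (α' : Fin n → ℕ) (αN : ℕ) (f : (Fin n → ℝ) × ℝ → ℝ) :
    mdv α' αN f = iteratedDirDeriv ℝ (multiIndexDirections α' αN) f := by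
  change _ = (multiIndexDirections α' αN).foldr pdv f
  simp only [mdv, multiIndexDirections, List.foldr_append, List.foldr_flatMap,
    foldr_replicate_eq_iterate]

theorem length_multiIndexDirections (α' : Fin n → ℕ) (αN : ℕ) :
    (multiIndexDirections α' αN).length = αN + ∑ j, α' j := by
  simp [multiIndexDirections, List.length_flatMap, Fin.sum_univ_def]

theorem prod_map_multiIndexDirections {M : Type*} [CommMonoid M] (α' : Fin n → ℕ) (αN : ℕ)
    (f : (Fin n → ℝ) × ℝ → M) :
    ((multiIndexDirections α' αN).map f).prod =
      f (0, 1) ^ αN * ∏ j, f (Pi.single j 1, 0) ^ α' j := by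
  simp [multiIndexDirections, List.flatMap_def, List.prod_flatten, Function.comp_def,
    Fin.prod_univ_def]

variable (n) in
/-- The dilation `(z', z_N) ↦ (ε z', z_N)`. -/
noncomputable def tangentialDilation (ε : ℝ) : (Fin n → ℝ) × ℝ →L[ℝ] (Fin n → ℝ) × ℝ :=
  (ε • ContinuousLinearMap.id ℝ (Fin n → ℝ)).prodMap (ContinuousLinearMap.id ℝ ℝ)

theorem prod_norm_tangentialDilation_multiIndexDirections (α' : Fin n → ℕ) (αN : ℕ) (ε : ℝ) :
    ((multiIndexDirections α' αN).map fun v => ‖tangentialDilation n ε v‖).prod =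
      |ε| ^ ∑ j, α' j := by
  have norm_last : ‖tangentialDilation n ε (0, 1)‖ = 1 := by simp [tangentialDilation]
  have norm_single (j : Fin n) : ‖tangentialDilation n ε (Pi.single j 1, 0)‖ = |ε| := by
    simp [tangentialDilation, norm_smul, Pi.norm_single]
  simp only [prod_map_multiIndexDirections, norm_last, norm_single, one_pow, one_mul,
    Finset.prod_pow_eq_pow_sum]

end MultiIndex

theorem stmt17_general {n : ℕ} {ψ : (Fin n → ℝ) × ℝ → ℝ} (α' : Fin n → ℕ) (αN : ℕ)
    (hψ : ContDiff ℝ (αN + ∑ j, α' j : ℕ) ψ)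
    (hbdd : ∀ k, 1 ≤ k → k ≤ αN + ∑ j, α' j → ∃ M : ℝ, ∀ z, ‖iteratedFDeriv ℝ k ψ z‖ ≤ M) :
    ∃ C > 0, ∀ τ γ ε : ℝ, 1 ≤ γ → ∀ z : (Fin n → ℝ) × ℝ,
      |mdv α' αN (fun w => τ * γ * Real.exp (γ * ψ (fun j => ε * w.1 j, w.2))) z| ≤
        C * γ ^ αN * (|ε| * γ) ^ (∑ j, α' j) *
          |τ * γ * Real.exp (γ * ψ (fun j => ε * z.1 j, z.2))| := by
  obtain ⟨C, C_pos, hC⟩ := exists_norm_iteratedFDeriv_const_mul_exp_le hψ hbdd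
  refine ⟨C, C_pos, fun τ γ ε hγ z => ?_⟩
  let G : (Fin n → ℝ) × ℝ → ℝ := fun y => τ * γ * Real.exp (γ * ψ y)
  have hG : ContDiff ℝ (multiIndexDirections α' αN).length G := by
    rw [length_multiIndexDirections]
    exact contDiff_const.mul (contDiff_const.mul hψ).exp
  calc |mdv α' αN (fun w => G (tangentialDilation n ε w)) z|
      ≤ ‖iteratedFDeriv ℝ (αN + ∑ j, α' j) G (tangentialDilation n ε z)‖ * |ε| ^ ∑ j, α' j := by
        rw [mdv_eq_iteratedDirDeriv, ← length_multiIndexDirections,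
          ← prod_norm_tangentialDilation_multiIndexDirections α' αN]
        exact norm_iteratedDirDeriv_comp_clm_le _ _ hG z
    _ ≤ C * γ ^ (αN + ∑ j, α' j) * |G (tangentialDilation n ε z)| * |ε| ^ ∑ j, α' j := by
        gcongr
        exact hC (τ * γ) γ hγ (tangentialDilation n ε z)
    _ = C * γ ^ αN * (|ε| * γ) ^ (∑ j, α' j) * |G (tangentialDilation n ε z)| := by
        rw [pow_add, mul_pow]
        ring

/-- `τ̃ = τγ exp(γψ(εz', z_N))` is a symbol of order `(0;1)`: for every multi-index
`α = (α', α_N)` there is `C_α > 0`, independent of the parameters, with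
`|∂_z^α τ̃| ≤ C_α γ^{α_N} (1+εγ)^{|α'|} τ̃`. -/
theorem stmt17 (n : ℕ)
    (ψ : ((Fin n → ℝ) × ℝ) → ℝ) (hψ : ContDiff ℝ (⊤ : ℕ∞) ψ)
    (hbdd : ∀ k : ℕ, 1 ≤ k → ∃ M : ℝ, ∀ z, ‖iteratedFDeriv ℝ k ψ z‖ ≤ M) :
    ∀ (α' : Fin n → ℕ) (αN : ℕ), ∃ C > 0,
      ∀ (τ γ ε : ℝ), 1 ≤ τ → 1 ≤ γ → 0 ≤ ε → ε ≤ 1 →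
      ∀ z : (Fin n → ℝ) × ℝ,
        |mdv α' αN (fun w => τ * γ * Real.exp (γ * ψ (fun j => ε * w.1 j, w.2))) z| ≤
          C * γ ^ αN * (1 + ε * γ) ^ (∑ j, α' j) *
            (τ * γ * Real.exp (γ * ψ (fun j => ε * z.1 j, z.2))) := by
  intro α' αN
  obtain ⟨C, C_pos, hC⟩ := stmt17_general α' αN (hψ.of_le (by exact_mod_cast le_top))
    fun k hk _ => hbdd k hk
  refine ⟨C, C_pos, fun τ γ ε hτ hγ hε _ z => (hC τ γ ε hγ z).trans ?_⟩
  rw [abs_of_nonneg hε, abs_of_nonneg (by positivity)]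
  gcongr
  exact le_add_of_nonneg_left zero_le_one
end

section
/- Assume that for every M ∈ ℝ^N ∖ {0} the symbol ℓ satisfies the simple-characteristic property in direction M on W: for all z ∈ W, ζ ∈ ℝ^N and θ ≥ 0, the conditions ℓ(z, ζ + iθM) = 0 and ∑_{j=1}^N M_j ∂_{ζ_j} ℓ(z, ζ + iθM) = 0 imply ζ = 0 and θ = 0. Then there exist C > 0 and γ₀ ≥ 1 such that for all z ∈ V̄, ζ ∈ ℝ^N, τ ≥ 1, γ ≥ γ₀ and ε ∈ [0,1]: |F(z,ζ)|² + τ φ(z) |∇ψ_ε(z)|² {Re F, Im F}(z,ζ) ≥ C (|ζ|² + (τγφ(z))²)^{m}, where F(z,ζ) := ℓ(z, ζ + i τ̂(z)) and the Poisson bracket is taken in the variables (z,ζ) with the parameters τ, γ, ε fixed. -/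
/-- The configuration space `ℝ^{N−1} × ℝ`, `z = (z', z_N)`. -/
abbrev Zsp (n : ℕ) := (Fin n → ℝ) × ℝ

/-- Complexification of a real (co)vector. -/
noncomputable def cplx {n : ℕ} (v : Zsp n) : (Fin n → ℂ) × ℂ :=
  (fun j => (v.1 j : ℂ), (v.2 : ℂ))

/-- `ψ_ε(z) = ψ(ε z', z_N)`. -/
noncomputable def psiEps {n : ℕ} (ψ : Zsp n → ℝ) (ε : ℝ) : Zsp n → ℝ :=
  fun z => ψ (fun j => ε * z.1 j, z.2)

/-- Gradient of a function on `ℝ^{N−1} × ℝ`. -/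
noncomputable def gradZ {n : ℕ} (f : Zsp n → ℝ) (z : Zsp n) : Zsp n :=
  (fun j => fderiv ℝ f z (Pi.single j 1, (0 : ℝ)),
   fderiv ℝ f z ((0 : Fin n → ℝ), (1 : ℝ)))

/-- Euclidean norm on `ℝ^{N−1} × ℝ`. -/
noncomputable def znorm {n : ℕ} (v : Zsp n) : ℝ :=
  Real.sqrt ((∑ j, (v.1 j) ^ 2) + v.2 ^ 2)

/-- Poisson bracket `{f,g} = ∑_j (∂_{ζ_j} f ∂_{z_j} g − ∂_{z_j} f ∂_{ζ_j} g)` on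
`(ℝ^{N−1} × ℝ) × (ℝ^{N−1} × ℝ)`, splitting the coordinates as `(z', z_N; ζ', ζ_N)`. -/
noncomputable def pbZ {n : ℕ} (f g : Zsp n × Zsp n → ℝ) (w : Zsp n × Zsp n) : ℝ :=
  (∑ j : Fin n,
    (fderiv ℝ f w (((0 : Fin n → ℝ), (0 : ℝ)), (Pi.single j 1, (0 : ℝ))) *
        fderiv ℝ g w ((Pi.single j 1, (0 : ℝ)), ((0 : Fin n → ℝ), (0 : ℝ))) -
      fderiv ℝ f w ((Pi.single j 1, (0 : ℝ)), ((0 : Fin n → ℝ), (0 : ℝ))) *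
        fderiv ℝ g w (((0 : Fin n → ℝ), (0 : ℝ)), (Pi.single j 1, (0 : ℝ))))) +
  (fderiv ℝ f w (((0 : Fin n → ℝ), (0 : ℝ)), ((0 : Fin n → ℝ), (1 : ℝ))) *
      fderiv ℝ g w (((0 : Fin n → ℝ), (1 : ℝ)), ((0 : Fin n → ℝ), (0 : ℝ))) -
    fderiv ℝ f w (((0 : Fin n → ℝ), (1 : ℝ)), ((0 : Fin n → ℝ), (0 : ℝ))) *
      fderiv ℝ g w (((0 : Fin n → ℝ), (0 : ℝ)), ((0 : Fin n → ℝ), (1 : ℝ))))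

/-!
Write `T = τγφ`. Differentiating `φ = exp(γψ)` once more in `τ̂ = T∇ψ` produces `γT ∇ψ ⊗ ∇ψ`, which
contributes `γT|∂_{∇ψ}ℓ|²` to the Poisson bracket; after multiplication by `τφ|∇ψ|² = γ⁻¹T|∇ψ|²` the
left-hand side becomes `|ℓ|² + |∇ψ|²|T∂_{∇ψ}ℓ|² + γ⁻¹R`, all at `ζ + iT∇ψ`. Both the leading part
and `R` are homogeneous of degree `2m` in `(ζ, T)`. The leading part is positive for
`(ζ, T) ≠ 0`, `T ≥ 0`: for `T > 0` this is the simple-characteristic property in the direction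
`T∇ψ`, and for `T = 0` a real zero `ζ ≠ 0` of `ℓ` would be a multiple zero in its own direction by
homogeneity. Compactness of the half-sphere bounds the leading part below by a constant, and large
`γ` absorbs `γ⁻¹R`.
-/

open Complex Function Set
open scoped ContDiff ComplexConjugate Topology

section HomogeneousCompactness

variable {X E : Type*} [TopologicalSpace X] [NormedAddCommGroup E] [NormedSpace ℝ E]

lemma exists_pos_forall_le_add_inv_mul {s : Set X} (hs : IsCompact s) {f g : X → ℝ}
    (hf : ContinuousOn f s) (hg : ContinuousOn g s) (hpos : ∀ x ∈ s, 0 < f x) :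
    ∃ C > 0, ∃ γ₀ : ℝ, 1 ≤ γ₀ ∧ ∀ γ, γ₀ ≤ γ → ∀ x ∈ s, C ≤ f x + γ⁻¹ * g x := by
  obtain ⟨b, hb, hbf⟩ := hs.exists_forall_le' hf hpos
  obtain ⟨B, hB⟩ := hs.exists_bound_of_continuousOn hg
  refine ⟨b / 2, half_pos hb, max 1 (2 * B / b), le_max_left _ _, fun γ hγ x hx ↦ ?_⟩
  obtain ⟨hγ₁, hγB⟩ := max_le_iff.1 hγ
  have hγ₀ : 0 < γ := by linarith
  have hsmall : -(b / 2) ≤ γ⁻¹ * g x := by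
    rw [inv_mul_eq_div, le_div_iff₀ hγ₀]
    rw [div_le_iff₀ hb] at hγB
    linarith [(abs_le.1 (hB x hx)).1]
  linarith [hbf x hx]

lemma exists_pos_mul_norm_pow_le_add_inv_mul [ProperSpace E] {K : Set X} (hK : IsCompact K)
    {S : Set E} (hS : IsClosed S) (hS_smul : ∀ c : ℝ, 0 < c → ∀ w ∈ S, c • w ∈ S)
    {f g : X → E → ℝ} {k : ℕ} (hf : ContinuousOn (uncurry f) (K ×ˢ S))
    (hg : ContinuousOn (uncurry g) (K ×ˢ S))
    (hf_smul : ∀ x ∈ K, ∀ c : ℝ, ∀ w, f x (c • w) = c ^ k * f x w)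
    (hg_smul : ∀ x ∈ K, ∀ c : ℝ, ∀ w, g x (c • w) = c ^ k * g x w)
    (hpos : ∀ x ∈ K, ∀ w ∈ S, w ≠ 0 → 0 < f x w) :
    ∃ C > 0, ∃ γ₀ : ℝ, 1 ≤ γ₀ ∧ ∀ γ, γ₀ ≤ γ → ∀ x ∈ K, ∀ w ∈ S, w ≠ 0 →
      C * ‖w‖ ^ k ≤ f x w + γ⁻¹ * g x w := by
  have hsphere : IsCompact (K ×ˢ (Metric.sphere (0 : E) 1 ∩ S)) :=
    hK.prod ((isCompact_sphere 0 1).inter_right hS)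
  have hsub : K ×ˢ (Metric.sphere (0 : E) 1 ∩ S) ⊆ K ×ˢ S :=
    prod_mono_right inter_subset_right
  obtain ⟨C, hC, γ₀, hγ₀, h⟩ := exists_pos_forall_le_add_inv_mul hsphere (hf.mono hsub)
    (hg.mono hsub) fun q hq ↦
      hpos q.1 hq.1 q.2 hq.2.2 (ne_zero_of_mem_unit_sphere ⟨q.2, hq.2.1⟩)
  refine ⟨C, hC, γ₀, hγ₀, fun γ hγ x hx w hw hw₀ ↦ ?_⟩
  have hnorm : 0 < ‖w‖ := norm_pos_iff.2 hw₀
  have hunit : ‖‖w‖⁻¹ • w‖ = 1 := norm_smul_inv_norm (𝕜 := ℝ) hw₀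
  have hle := h γ hγ (x, ‖w‖⁻¹ • w)
    ⟨hx, mem_sphere_zero_iff_norm.2 hunit, hS_smul _ (inv_pos.2 hnorm) w hw⟩
  have hw_eq : w = ‖w‖ • ‖w‖⁻¹ • w := (smul_inv_smul₀ hnorm.ne' w).symm
  calc C * ‖w‖ ^ k
      ≤ (f x (‖w‖⁻¹ • w) + γ⁻¹ * g x (‖w‖⁻¹ • w)) * ‖w‖ ^ k := by gcongr; exact hle
    _ = f x (‖w‖ • ‖w‖⁻¹ • w) + γ⁻¹ * g x (‖w‖ • ‖w‖⁻¹ • w) := by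
      rw [hf_smul x hx ‖w‖, hg_smul x hx ‖w‖]; ring
    _ = f x w + γ⁻¹ * g x w := by rw [← hw_eq]

end HomogeneousCompactness

section Symbols

variable {X Y : Type*} [NormedAddCommGroup X] [NormedSpace ℝ X] [NormedAddCommGroup Y]
  [NormedSpace ℂ Y]

/-- Symbols on `W` that are homogeneous of degree `m` in the complex covector variable: jointly
`C¹` over the reals, holomorphic in the covector. -/
structure IsHomogeneousSymbol (L : X → Y → ℂ) (m : ℕ) (W : Set X) : Prop where
  contDiffOn : ContDiffOn ℝ 1 (uncurry L) (W ×ˢ univ)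
  differentiable : ∀ z ∈ W, Differentiable ℂ (L z)
  map_smul : ∀ z ∈ W, ∀ (c : ℂ) (x : Y), L z (c • x) = c ^ m * L z x

lemma isHomogeneousSymbol_mul {W : Set X} {m : ℕ} {a : X → ℂ} {p : Y → ℂ}
    (ha : ContDiffOn ℝ 1 a W) (hp : ContDiff ℂ 1 p)
    (hp_smul : ∀ (c : ℂ) (x : Y), p (c • x) = c ^ m * p x) :
    IsHomogeneousSymbol (fun z x ↦ a z * p x) m W where
  contDiffOn := (ha.comp contDiffOn_fst fun _ hq ↦ hq.1).mul
    ((hp.restrict_scalars ℝ).comp contDiff_snd).contDiffOn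
  differentiable _ _ := (hp.differentiable one_ne_zero).const_mul _
  map_smul z _ c x := by rw [hp_smul, mul_left_comm]

namespace IsHomogeneousSymbol

variable {L : X → Y → ℂ} {m : ℕ} {W : Set X}

lemma sum {ι : Type*} {s : Finset ι} {F : ι → X → Y → ℂ}
    (hF : ∀ i ∈ s, IsHomogeneousSymbol (F i) m W) :
    IsHomogeneousSymbol (fun z x ↦ ∑ i ∈ s, F i z x) m W where
  contDiffOn := ContDiffOn.sum fun i hi ↦ (hF i hi).contDiffOn
  differentiable z hz := Differentiable.fun_sum fun i hi ↦ (hF i hi).differentiable z hz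
  map_smul z hz c x := by
    rw [Finset.mul_sum]
    exact Finset.sum_congr rfl fun i hi ↦ (hF i hi).map_smul z hz c x

lemma continuousOn_fderiv (hL : IsHomogeneousSymbol L m W) (hW : IsOpen W) :
    ContinuousOn (fderiv ℝ (uncurry L)) (W ×ˢ univ) :=
  hL.contDiffOn.continuousOn_fderiv_of_isOpen (hW.prod isOpen_univ) le_rfl

lemma hasFDerivAt (hL : IsHomogeneousSymbol L m W) (hW : IsOpen W) {z : X} (hz : z ∈ W)
    (x : Y) :
    HasFDerivAt (uncurry L) (fderiv ℝ (uncurry L) (z, x)) (z, x) :=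
  ((hL.contDiffOn.contDiffAt ((hW.prod isOpen_univ).mem_nhds ⟨hz, mem_univ x⟩)).differentiableAt
    one_ne_zero).hasFDerivAt

lemma fderiv_zero_prodMk (hL : IsHomogeneousSymbol L m W) (hW : IsOpen W) {z : X} (hz : z ∈ W)
    (x v : Y) :
    fderiv ℝ (uncurry L) (z, x) (0, v) = fderiv ℂ (L z) x v := by
  have hslice : HasFDerivAt (L z)
      ((fderiv ℝ (uncurry L) (z, x)).comp (ContinuousLinearMap.inr ℝ X Y)) x :=
    (hL.hasFDerivAt hW hz x).comp x (hasFDerivAt_prodMk_right z x)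
  have hcomplex := (hL.differentiable z hz x).hasFDerivAt.restrictScalars ℝ
  exact DFunLike.congr_fun (hslice.unique hcomplex) v

lemma fderiv_zero_smul (hL : IsHomogeneousSymbol L m W) (hW : IsOpen W) {z : X} (hz : z ∈ W)
    (x : Y) (c : ℂ) (v : Y) :
    fderiv ℝ (uncurry L) (z, x) (0, c • v) = c * fderiv ℝ (uncurry L) (z, x) (0, v) := by
  simp only [hL.fderiv_zero_prodMk hW hz, _root_.map_smul, smul_eq_mul]

lemma deriv_add_smul (hL : IsHomogeneousSymbol L m W) (hW : IsOpen W) {z : X} (hz : z ∈ W)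
    (x v : Y) :
    deriv (fun t : ℂ ↦ L z (x + t • v)) 0 = fderiv ℝ (uncurry L) (z, x) (0, v) := by
  rw [hL.fderiv_zero_prodMk hW hz]
  exact (hL.differentiable z hz x).lineDeriv_eq_fderiv

lemma fderiv_smul (hL : IsHomogeneousSymbol L m W) (hW : IsOpen W) {z : X} (hz : z ∈ W)
    (c : ℂ) (x : Y) (u : X) (v : Y) :
    fderiv ℝ (uncurry L) (z, c • x) (u, c • v) = c ^ m * fderiv ℝ (uncurry L) (z, x) (u, v) := by
  let dilation : X × Y →L[ℝ] X × Y :=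
    (ContinuousLinearMap.id ℝ X).prodMap (c • ContinuousLinearMap.id ℝ Y)
  have hcomp : HasFDerivAt (uncurry L ∘ dilation)
      ((fderiv ℝ (uncurry L) (z, c • x)).comp dilation) (z, x) :=
    (hL.hasFDerivAt hW hz (c • x)).comp (z, x) dilation.hasFDerivAt
  have hscaled := (hL.hasFDerivAt hW hz x).const_mul (c ^ m)
  have heq : uncurry L ∘ dilation =ᶠ[𝓝 (z, x)] fun q ↦ c ^ m * uncurry L q := by
    filter_upwards [(hW.prod isOpen_univ).mem_nhds ⟨hz, mem_univ x⟩] with q hq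
    exact hL.map_smul q.1 hq.1 c q.2
  exact DFunLike.congr_fun (hcomp.unique (hscaled.congr_of_eventuallyEq heq)) (u, v)

end IsHomogeneousSymbol

end Symbols

section Coordinates

variable {n : ℕ}

lemma znorm_sq (v : Zsp n) : znorm v ^ 2 = (∑ j, v.1 j ^ 2) + v.2 ^ 2 :=
  Real.sq_sqrt (by positivity)

lemma znorm_zero : znorm (0 : Zsp n) = 0 := by simp [znorm]

lemma continuous_znorm : Continuous (znorm : Zsp n → ℝ) := by
  unfold znorm
  fun_prop

lemma znorm_pos {v : Zsp n} (hv : v ≠ 0) : 0 < znorm v := by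
  refine Real.sqrt_pos.2 ((by positivity : 0 ≤ (∑ j, v.1 j ^ 2) + v.2 ^ 2).lt_of_ne' fun h ↦ hv ?_)
  obtain ⟨hfst, hsnd⟩ := (add_eq_zero_iff_of_nonneg (by positivity) (by positivity)).1 h
  have hcoord := (Finset.sum_eq_zero_iff_of_nonneg fun j _ ↦ sq_nonneg (v.1 j)).1 hfst
  exact Prod.ext (funext fun j ↦ pow_eq_zero_iff two_ne_zero |>.1 (hcoord j (Finset.mem_univ j)))
    (pow_eq_zero_iff two_ne_zero |>.1 hsnd)

lemma znorm_sq_add_sq_le (w : Zsp n × ℝ) :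
    znorm w.1 ^ 2 + w.2 ^ 2 ≤ (n + 2) * ‖w‖ ^ 2 := by
  have sq_le {t : ℝ} (ht : ‖t‖ ≤ ‖w‖) : t ^ 2 ≤ ‖w‖ ^ 2 :=
    sq_le_sq.2 (by rwa [abs_norm])
  have hfst : ∑ j, w.1.1 j ^ 2 ≤ n * ‖w‖ ^ 2 := by
    simpa using Finset.sum_le_card_nsmul Finset.univ (fun j ↦ w.1.1 j ^ 2) (‖w‖ ^ 2) fun j _ ↦
      sq_le ((norm_le_pi_norm _ j).trans ((norm_fst_le w.1).trans (norm_fst_le w)))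
  have hsnd : w.1.2 ^ 2 ≤ ‖w‖ ^ 2 := sq_le ((norm_snd_le w.1).trans (norm_fst_le w))
  have hparam : w.2 ^ 2 ≤ ‖w‖ ^ 2 := sq_le (norm_snd_le w)
  rw [znorm_sq]
  linarith

/-- The standard basis of `ℝ^{N−1} × ℝ`; the index `none` is the last coordinate `z_N`. -/
def coordVec : Option (Fin n) → Zsp n
  | some j => (Pi.single j 1, 0)
  | none => (0, 1)

lemma gradZ_eq_sum (f : Zsp n → ℝ) (z : Zsp n) :
    gradZ f z = ∑ i, fderiv ℝ f z (coordVec i) • coordVec i := by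
  rw [Fintype.sum_option]
  ext j
  · simp [gradZ, coordVec, Prod.fst_sum, Finset.sum_apply, Pi.single_apply]
  · simp [gradZ, coordVec, Prod.snd_sum]

/-- `cplx` as a continuous real-linear map. -/
noncomputable def cplxCLM (n : ℕ) : Zsp n →L[ℝ] (Fin n → ℂ) × ℂ :=
  (ContinuousLinearMap.pi fun j ↦ ofRealCLM.comp (ContinuousLinearMap.proj j)).prodMap ofRealCLM

/-- The identification `(ξ, η) ↦ ξ + iη` of pairs of real covectors with complex covectors. -/
noncomputable def toComplex (n : ℕ) : Zsp n × Zsp n →L[ℝ] (Fin n → ℂ) × ℂ :=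
  (cplxCLM n).coprod (I • cplxCLM n)

lemma toComplex_mk (ξ η : Zsp n) : toComplex n (ξ, η) = cplx ξ + I • cplx η := rfl

lemma toComplex_mk_zero (ξ : Zsp n) : toComplex n (ξ, 0) = cplx ξ := by
  ext <;> simp [toComplex_mk, cplx]

lemma toComplex_zero_mk (η : Zsp n) : toComplex n (0, η) = I • toComplex n (η, 0) := by
  simp [toComplex]

lemma pbZ_re_im {F : Zsp n × Zsp n → ℂ} {F' : Zsp n × Zsp n →L[ℝ] ℂ} {w : Zsp n × Zsp n}
    (hF : HasFDerivAt F F' w) :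
    pbZ (fun w ↦ (F w).re) (fun w ↦ (F w).im) w =
      ∑ i, (conj (F' (0, coordVec i)) * F' (coordVec i, 0)).im := by
  have hre : HasFDerivAt (fun w ↦ (F w).re) (reCLM.comp F') w := reCLM.hasFDerivAt.comp w hF
  have him : HasFDerivAt (fun w ↦ (F w).im) (imCLM.comp F') w := imCLM.hasFDerivAt.comp w hF
  rw [pbZ, hre.fderiv, him.fderiv, Fintype.sum_option, add_comm]
  have im_conj_mul (a b : ℂ) : (conj a * b).im = a.re * b.im - b.re * a.im := by
    simp only [mul_im, conj_re, conj_im]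
    ring
  simp only [im_conj_mul]
  rfl

end Coordinates

section Bracket

variable {n m : ℕ} {L : Zsp n → (Fin n → ℂ) × ℂ → ℂ} {W : Set (Zsp n)}

lemma pbZ_symbol_comp (hL : IsHomogeneousSymbol L m W) (hW : IsOpen W) {z : Zsp n} (hz : z ∈ W)
    (ζ : Zsp n) {η : Zsp n → Zsp n} {η' : Zsp n →L[ℝ] Zsp n} (hη : HasFDerivAt η η' z) :
    pbZ (fun w ↦ (L w.1 (toComplex n (w.2, η w.1))).re)
        (fun w ↦ (L w.1 (toComplex n (w.2, η w.1))).im) (z, ζ) =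
      ∑ i, (conj (fderiv ℝ (uncurry L) (z, toComplex n (ζ, η z))
          (0, toComplex n (coordVec i, 0))) *
        fderiv ℝ (uncurry L) (z, toComplex n (ζ, η z))
          (coordVec i, toComplex n (0, η' (coordVec i)))).im := by
  have hinner : HasFDerivAt (fun w : Zsp n × Zsp n ↦ (w.1, toComplex n (w.2, η w.1)))
      ((ContinuousLinearMap.fst ℝ _ _).prod ((toComplex n).comp
        ((ContinuousLinearMap.snd ℝ _ _).prod (η'.comp (ContinuousLinearMap.fst ℝ _ _)))))
      (z, ζ) :=
    hasFDerivAt_fst.prodMk ((toComplex n).hasFDerivAt.comp (z, ζ)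
      (hasFDerivAt_snd.prodMk (hη.comp (z, ζ) hasFDerivAt_fst)))
  refine (pbZ_re_im ((hL.hasFDerivAt hW hz _).comp (z, ζ) hinner)).trans ?_
  simp

lemma sum_im_conj_mul_I_mul_sum {ι : Type*} [Fintype ι] (g : ι → ℝ) (d : ι → ℂ) :
    ∑ i, (conj (d i) * (g i * (I * ∑ j, g j * d j))).im = ‖∑ j, g j * d j‖ ^ 2 := by
  have hterm (i : ι) (S : ℂ) : (conj (d i) * (g i * (I * S))).im = (conj (g i * d i) * S).re := by
    simp only [map_mul, conj_ofReal, mul_im, mul_re, I_re, I_im, ofReal_re, ofReal_im]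
    ring
  simp only [hterm, ← re_sum, ← Finset.sum_mul, ← map_sum]
  rw [mul_comm, mul_conj, normSq_eq_norm_sq, ofReal_re]

/-- The gradient terms of the bracket recombine into a square because `∑ᵢ gᵢ ∂_{ζᵢ} = ∂_G`. -/
lemma sum_im_conj_mul_eq {D : Zsp n × ((Fin n → ℂ) × ℂ) →L[ℝ] ℂ}
    (hD : ∀ v, D (0, I • v) = I * D (0, v)) {g : Option (Fin n) → ℝ} {G : Zsp n}
    (hG : G = ∑ i, g i • coordVec i) (h : Option (Fin n) → Zsp n) (T γ : ℝ) :
    ∑ i, (conj (D (0, toComplex n (coordVec i, 0))) *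
        D (coordVec i, toComplex n (0, T • ((γ * g i) • G + h i)))).im =
      γ * T * ‖D (0, toComplex n (G, 0))‖ ^ 2 +
        ∑ i, (conj (D (0, toComplex n (coordVec i, 0))) *
          D (coordVec i, toComplex n (0, T • h i))).im := by
  let dζ : Zsp n →L[ℝ] ℂ := D.comp ((ContinuousLinearMap.inr ℝ _ _).comp
    ((toComplex n).comp (ContinuousLinearMap.inl ℝ _ _)))
  change ∑ i, (conj (dζ (coordVec i)) * _).im =
    γ * T * ‖dζ G‖ ^ 2 + ∑ i, (conj (dζ (coordVec i)) * _).im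
  have hdG : dζ G = ∑ i, g i * dζ (coordVec i) := by
    simp only [hG, map_sum, map_smul, real_smul]
  have hsplit (i : Option (Fin n)) :
      D (coordVec i, toComplex n (0, T • ((γ * g i) • G + h i))) =
        (γ * T : ℝ) * (g i * (I * dζ G)) + D (coordVec i, toComplex n (0, T • h i)) := by
    have hvec : (coordVec i, toComplex n (0, T • ((γ * g i) • G + h i))) =
        (γ * T) • g i • ((0 : Zsp n), toComplex n (0, G)) +
          (coordVec i, toComplex n (0, T • h i)) := by
      simp only [Prod.smul_mk, Prod.mk_add_mk, smul_zero, zero_add, ← map_smul, ← map_add]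
      congr 3
      module
    rw [hvec, map_add, map_smul, map_smul, toComplex_zero_mk, hD, real_smul, real_smul]
    rfl
  simp only [hsplit, mul_add, add_im, Finset.sum_add_distrib, mul_left_comm _ ((γ * T : ℝ) : ℂ),
    im_ofReal_mul, ← Finset.mul_sum]
  rw [hdG, sum_im_conj_mul_I_mul_sum]

/-- The part of the weighted symbol inequality that survives as `γ → ∞`, at the real covector
`w.1` and the large parameter `w.2 = τγφ`; here `G` stands for `∇ψ`. -/
noncomputable def leadingPart (L : Zsp n → (Fin n → ℂ) × ℂ → ℂ) (z G : Zsp n) (w : Zsp n × ℝ) :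
    ℝ :=
  ‖L z (toComplex n (w.1, w.2 • G))‖ ^ 2 +
    znorm G ^ 2 * ‖fderiv ℝ (uncurry L) (z, toComplex n (w.1, w.2 • G))
      (0, toComplex n (w.2 • G, 0))‖ ^ 2

/-- The part of the weighted symbol inequality carrying a factor `γ⁻¹`; here `G` stands for `∇ψ`
and `H` for the Hessian of `ψ`. -/
noncomputable def remainder (L : Zsp n → (Fin n → ℂ) × ℂ → ℂ) (z G : Zsp n)
    (H : Zsp n →L[ℝ] Zsp n) (w : Zsp n × ℝ) : ℝ :=
  znorm G ^ 2 * ∑ i, (conj (fderiv ℝ (uncurry L) (z, toComplex n (w.1, w.2 • G))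
      (0, toComplex n (w.2 • coordVec i, 0))) *
    fderiv ℝ (uncurry L) (z, toComplex n (w.1, w.2 • G))
      (coordVec i, toComplex n (0, w.2 • H (coordVec i)))).im

/-- The symbol `ℓ_φ(z, ζ) = ℓ(z, ζ + iτγφ∇ψ)`, `φ = exp(γψ)`, of the operator conjugated by the
weight `exp(τφ)`. -/
noncomputable def conjugatedSymbol (L : Zsp n → (Fin n → ℂ) × ℂ → ℂ) (ψ : Zsp n → ℝ) (τ γ : ℝ)
    (w : Zsp n × Zsp n) : ℂ :=
  L w.1 (cplx w.2 + I • cplx ((τ * γ * Real.exp (γ * ψ w.1)) • gradZ ψ w.1))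

lemma hasFDerivAt_exp_smul_gradZ {ψ : Zsp n → ℝ} {z : Zsp n} (hψ : DifferentiableAt ℝ ψ z)
    (hgrad : DifferentiableAt ℝ (gradZ ψ) z) (τ γ : ℝ) :
    HasFDerivAt (fun y ↦ (τ * γ * Real.exp (γ * ψ y)) • gradZ ψ y)
      ((τ * γ * Real.exp (γ * ψ z)) •
        ((γ • fderiv ℝ ψ z).smulRight (gradZ ψ z) + fderiv ℝ (gradZ ψ) z)) z := by
  refine ((((hψ.hasFDerivAt.const_mul γ).exp).const_mul (τ * γ)).smul
    hgrad.hasFDerivAt).congr_fderiv (ContinuousLinearMap.ext fun u ↦ ?_)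
  simp only [_root_.smul_apply, _root_.add_apply, ContinuousLinearMap.smulRight_apply,
    smul_eq_mul]
  module

lemma norm_sq_add_mul_pbZ_conjugatedSymbol (hL : IsHomogeneousSymbol L m W) (hW : IsOpen W)
    {z : Zsp n} (hz : z ∈ W) {ψ : Zsp n → ℝ} (hψ : DifferentiableAt ℝ ψ z)
    (hgrad : DifferentiableAt ℝ (gradZ ψ) z) (τ : ℝ) {γ : ℝ} (hγ : γ ≠ 0) (ζ : Zsp n) :
    ‖conjugatedSymbol L ψ τ γ (z, ζ)‖ ^ 2 + τ * Real.exp (γ * ψ z) * znorm (gradZ ψ z) ^ 2 *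
        pbZ (fun w ↦ (conjugatedSymbol L ψ τ γ w).re) (fun w ↦ (conjugatedSymbol L ψ τ γ w).im)
          (z, ζ) =
      leadingPart L z (gradZ ψ z) (ζ, τ * γ * Real.exp (γ * ψ z)) +
        γ⁻¹ * remainder L z (gradZ ψ z) (fderiv ℝ (gradZ ψ) z)
          (ζ, τ * γ * Real.exp (γ * ψ z)) := by
  have hbracket := (pbZ_symbol_comp hL hW hz ζ (hasFDerivAt_exp_smul_gradZ hψ hgrad τ γ)).trans
    (sum_im_conj_mul_eq (fun v ↦ hL.fderiv_zero_smul hW hz _ I v) (gradZ_eq_sum ψ z)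
      (fun i ↦ fderiv ℝ (gradZ ψ) z (coordVec i)) (τ * γ * Real.exp (γ * ψ z)) γ)
  simp only [conjugatedSymbol, ← toComplex_mk]
  rw [hbracket]
  have hprod : τ * Real.exp (γ * ψ z) = γ⁻¹ * (τ * γ * Real.exp (γ * ψ z)) := by field_simp
  rw [hprod]
  generalize τ * γ * Real.exp (γ * ψ z) = T
  have hscale (v : Zsp n) : ((0 : Zsp n), toComplex n (T • v, 0)) =
      T • ((0 : Zsp n), toComplex n (v, 0)) :=
    Prod.ext (smul_zero T).symm (by rw [Prod.smul_snd, ← map_smul, Prod.smul_mk T v, smul_zero])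
  simp only [leadingPart, remainder, hscale, map_smul, real_smul, map_mul, conj_ofReal,
    mul_assoc, im_ofReal_mul, ← Finset.mul_sum, norm_mul, norm_real, mul_pow, Real.norm_eq_abs,
    sq_abs]
  field_simp
  ring

end Bracket

section Estimate

variable {n m : ℕ} {L : Zsp n → (Fin n → ℂ) × ℂ → ℂ} {W : Set (Zsp n)}

lemma fderiv_uncurry_toComplex_smul (hL : IsHomogeneousSymbol L m W) (hW : IsOpen W)
    {z : Zsp n} (hz : z ∈ W) (c : ℝ) (p : Zsp n × Zsp n) (u : Zsp n) (q : Zsp n × Zsp n) :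
    fderiv ℝ (uncurry L) (z, toComplex n (c • p)) (u, toComplex n (c • q)) =
      (c ^ m : ℝ) * fderiv ℝ (uncurry L) (z, toComplex n p) (u, toComplex n q) := by
  simpa only [map_smul, coe_smul, ofReal_pow] using hL.fderiv_smul hW hz c _ u (toComplex n q)

lemma leadingPart_smul (hL : IsHomogeneousSymbol L m W) (hW : IsOpen W) {z : Zsp n} (hz : z ∈ W)
    (G : Zsp n) (c : ℝ) (w : Zsp n × ℝ) :
    leadingPart L z G (c • w) = c ^ (2 * m) * leadingPart L z G w := by
  have hpoint : (c • w.1, (c • w.2) • G) = c • (w.1, w.2 • G) :=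
    Prod.ext rfl (smul_assoc c w.2 G)
  have hdir : ((c • w.2) • G, (0 : Zsp n)) = c • (w.2 • G, 0) :=
    Prod.ext (smul_assoc c w.2 G) (smul_zero c).symm
  have hvalue : L z (toComplex n (c • (w.1, w.2 • G))) =
      (c ^ m : ℝ) * L z (toComplex n (w.1, w.2 • G)) := by
    simpa only [map_smul, coe_smul, ofReal_pow] using hL.map_smul z hz c _
  simp only [leadingPart, Prod.smul_fst, Prod.smul_snd, hpoint, hdir, hvalue,
    fderiv_uncurry_toComplex_smul hL hW hz, norm_mul, norm_real, mul_pow, Real.norm_eq_abs, sq_abs]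
  ring

lemma remainder_smul (hL : IsHomogeneousSymbol L m W) (hW : IsOpen W) {z : Zsp n} (hz : z ∈ W)
    (G : Zsp n) (H : Zsp n →L[ℝ] Zsp n) (c : ℝ) (w : Zsp n × ℝ) :
    remainder L z G H (c • w) = c ^ (2 * m) * remainder L z G H w := by
  have hpoint : (c • w.1, (c • w.2) • G) = c • (w.1, w.2 • G) :=
    Prod.ext rfl (smul_assoc c w.2 G)
  have hdir (v : Zsp n) : ((c • w.2) • v, (0 : Zsp n)) = c • (w.2 • v, 0) :=
    Prod.ext (smul_assoc c w.2 v) (smul_zero c).symm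
  have hdir' (v : Zsp n) : ((0 : Zsp n), (c • w.2) • v) = c • (0, w.2 • v) :=
    Prod.ext (smul_zero c).symm (smul_assoc c w.2 v)
  simp only [remainder, Prod.smul_fst, Prod.smul_snd, hpoint, hdir, hdir',
    fderiv_uncurry_toComplex_smul hL hW hz, map_mul, conj_ofReal, mul_assoc,
    mul_left_comm _ ((c ^ m : ℝ) : ℂ), im_ofReal_mul, ← Finset.mul_sum]
  ring

variable {A : Type*} [TopologicalSpace A] {s : Set A} {z G : A → Zsp n} {w : A → Zsp n × ℝ}

lemma continuousOn_fderiv_uncurry_toComplex (hL : IsHomogeneousSymbol L m W) (hW : IsOpen W)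
    (hzW : MapsTo z s W) (hz : ContinuousOn z s) {p q : A → Zsp n × Zsp n} {u : A → Zsp n}
    (hp : ContinuousOn p s) (hu : ContinuousOn u s) (hq : ContinuousOn q s) :
    ContinuousOn (fun a ↦ fderiv ℝ (uncurry L) (z a, toComplex n (p a))
      (u a, toComplex n (q a))) s :=
  ((hL.continuousOn_fderiv hW).comp (hz.prodMk ((toComplex n).continuous.comp_continuousOn hp))
    fun _ ha ↦ ⟨hzW ha, mem_univ _⟩).clm_apply
      (hu.prodMk ((toComplex n).continuous.comp_continuousOn hq))

lemma continuousOn_leadingPart (hL : IsHomogeneousSymbol L m W) (hW : IsOpen W)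
    (hzW : MapsTo z s W) (hz : ContinuousOn z s) (hG : ContinuousOn G s)
    (hw : ContinuousOn w s) :
    ContinuousOn (fun a ↦ leadingPart L (z a) (G a) (w a)) s := by
  have hpoint : ContinuousOn (fun a ↦ ((w a).1, (w a).2 • G a)) s := by fun_prop
  have hvalue : ContinuousOn (fun a ↦ L (z a) (toComplex n ((w a).1, (w a).2 • G a))) s :=
    hL.contDiffOn.continuousOn.comp (hz.prodMk ((toComplex n).continuous.comp_continuousOn hpoint))
      fun _ ha ↦ ⟨hzW ha, mem_univ _⟩
  have hderiv := continuousOn_fderiv_uncurry_toComplex hL hW hzW hz hpoint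
    (continuousOn_const (c := (0 : Zsp n))) (q := fun a ↦ ((w a).2 • G a, 0)) (by fun_prop)
  exact (hvalue.norm.pow 2).add
    (((continuous_znorm.comp_continuousOn hG).pow 2).mul (hderiv.norm.pow 2))

lemma continuousOn_remainder (hL : IsHomogeneousSymbol L m W) (hW : IsOpen W)
    (hzW : MapsTo z s W) (hz : ContinuousOn z s) (hG : ContinuousOn G s)
    {H : A → Zsp n →L[ℝ] Zsp n} (hH : ContinuousOn H s) (hw : ContinuousOn w s) :
    ContinuousOn (fun a ↦ remainder L (z a) (G a) (H a) (w a)) s := by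
  have hpoint : ContinuousOn (fun a ↦ ((w a).1, (w a).2 • G a)) s := by fun_prop
  refine ((continuous_znorm.comp_continuousOn hG).pow 2).mul
    (continuousOn_finsetSum _ fun i _ ↦ continuous_im.comp_continuousOn
      ((continuous_conj.comp_continuousOn ?_).mul ?_))
  · exact continuousOn_fderiv_uncurry_toComplex hL hW hzW hz hpoint continuousOn_const
      (q := fun a ↦ ((w a).2 • coordVec i, 0)) (by fun_prop)
  · exact continuousOn_fderiv_uncurry_toComplex hL hW hzW hz hpoint continuousOn_const
      (q := fun a ↦ (0, (w a).2 • H a (coordVec i))) (by fun_prop)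

/-- The simple-characteristic property on `W` in every direction `M ≠ 0`: no `ζ + iθM` with
`θ ≥ 0`, other than `0`, is a multiple zero of the symbol along the complex direction `M`. -/
def HasSimpleCharacteristics (L : Zsp n → (Fin n → ℂ) × ℂ → ℂ) (W : Set (Zsp n)) : Prop :=
  ∀ M : Zsp n, M ≠ 0 → ∀ z ∈ W, ∀ ζ : Zsp n, ∀ θ : ℝ, 0 ≤ θ →
    L z (cplx ζ + ((θ : ℂ) * I) • cplx M) = 0 →
    deriv (fun t : ℂ ↦ L z (cplx ζ + ((θ : ℂ) * I) • cplx M + t • cplx M)) 0 = 0 →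
    ζ = 0 ∧ θ = 0

namespace HasSimpleCharacteristics

/-- Homogeneity makes a zero on the real line through `ζ` multiple in the direction `M = ζ`. -/
lemma apply_cplx_ne_zero (hs : HasSimpleCharacteristics L W) (hL : IsHomogeneousSymbol L m W)
    {z : Zsp n} (hz : z ∈ W) {ζ : Zsp n} (hζ : ζ ≠ 0) : L z (cplx ζ) ≠ 0 := by
  intro hzero
  have hline (t : ℂ) : L z (cplx ζ + t • cplx ζ) = 0 := by
    have hfactor : cplx ζ + t • cplx ζ = (1 + t) • cplx ζ := by rw [add_smul, one_smul]
    rw [hfactor, hL.map_smul z hz, hzero, mul_zero]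
  refine hζ (hs ζ hζ z hz ζ 0 le_rfl ?_ ?_).1
  · simpa using hzero
  · simp [hline]

lemma leadingPart_pos (hs : HasSimpleCharacteristics L W) (hL : IsHomogeneousSymbol L m W)
    (hW : IsOpen W) {z : Zsp n} (hz : z ∈ W) {G : Zsp n} (hG : G ≠ 0) {w : Zsp n × ℝ}
    (hw : w ≠ 0) (hw₂ : 0 ≤ w.2) : 0 < leadingPart L z G w := by
  obtain ⟨ζ, T⟩ := w
  dsimp only at hw₂
  have hGpos := znorm_pos hG
  refine (by unfold leadingPart; positivity : 0 ≤ leadingPart L z G (ζ, T)).lt_of_ne' fun h ↦ ?_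
  obtain ⟨hvalue, hderiv⟩ := (add_eq_zero_iff_of_nonneg (by positivity) (by positivity)).1 h
  replace hvalue : L z (toComplex n (ζ, T • G)) = 0 := by simpa using hvalue
  replace hderiv : fderiv ℝ (uncurry L) (z, toComplex n (ζ, T • G))
      (0, toComplex n (T • G, 0)) = 0 := by simpa [hGpos.ne'] using hderiv
  rcases hw₂.eq_or_lt with rfl | hT
  · have hζ : ζ ≠ 0 := fun h ↦ hw (by rw [h]; rfl)
    rw [zero_smul, toComplex_mk_zero] at hvalue
    exact hs.apply_cplx_ne_zero hL hz hζ hvalue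
  · have hTG : T • G ≠ 0 := smul_ne_zero hT.ne' hG
    have hpoint : cplx ζ + (((1 : ℝ) : ℂ) * I) • cplx (T • G) = toComplex n (ζ, T • G) := by
      rw [ofReal_one, one_mul, toComplex_mk]
    have := (hs (T • G) hTG z hz ζ 1 zero_le_one (hpoint ▸ hvalue) (by
      rw [hpoint, hL.deriv_add_smul hW hz, ← toComplex_mk_zero, hderiv])).2
    exact one_ne_zero this

end HasSimpleCharacteristics

end Estimate

section Weights

variable {n : ℕ} {P : Type*} [NormedAddCommGroup P] [NormedSpace ℝ P]

lemma contDiff_uncurry_gradZ {ψ : P → Zsp n → ℝ} {k : ℕ∞ω}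
    (hψ : ContDiff ℝ (k + 1) (uncurry ψ)) :
    ContDiff ℝ k (uncurry fun p ↦ gradZ (ψ p)) := by
  have hfderiv (v : Zsp n) : ContDiff ℝ k fun q : P × Zsp n ↦ fderiv ℝ (ψ q.1) q.2 v :=
    ContDiff.fderiv_apply (f := fun q : P × Zsp n ↦ ψ q.1)
      (hψ.comp (contDiff_fst.fst.prodMk contDiff_snd)) contDiff_snd contDiff_const le_rfl
  exact (contDiff_pi.2 fun j ↦ hfderiv _).prodMk (hfderiv _)

lemma continuous_fderiv_gradZ {ψ : P → Zsp n → ℝ} (hψ : ContDiff ℝ 2 (uncurry ψ)) :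
    Continuous fun q : P × Zsp n ↦ fderiv ℝ (gradZ (ψ q.1)) q.2 :=
  (ContDiff.fderiv (n := 0) (f := fun q : P × Zsp n ↦ gradZ (ψ q.1))
    ((contDiff_uncurry_gradZ (k := 1) hψ).comp (contDiff_fst.fst.prodMk contDiff_snd))
    contDiff_snd le_rfl).continuous

lemma contDiff_uncurry_psiEps {ψ : Zsp n → ℝ} {k : ℕ∞ω} (hψ : ContDiff ℝ k ψ) :
    ContDiff ℝ k (uncurry (psiEps ψ)) :=
  hψ.comp ((contDiff_pi.2 fun j ↦ by fun_prop).prodMk (by fun_prop))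

end Weights

section Polynomials

lemma contDiff_monomial {ι : Type*} [Fintype ι] (α : ι → ℕ) (k : ℕ) :
    ContDiff ℂ 1 fun x : (ι → ℂ) × ℂ ↦ (∏ j, x.1 j ^ α j) * x.2 ^ k := by
  fun_prop

lemma monomial_smul {ι : Type*} [Fintype ι] (α : ι → ℕ) (k : ℕ) (c : ℂ) (x : (ι → ℂ) × ℂ) :
    (∏ j, (c • x).1 j ^ α j) * (c • x).2 ^ k =
      c ^ (∑ j, α j + k) * ((∏ j, x.1 j ^ α j) * x.2 ^ k) := by
  simp only [Prod.smul_fst, Prod.smul_snd, Pi.smul_apply, smul_eq_mul, mul_pow,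
    Finset.prod_mul_distrib, Finset.prod_pow_eq_pow_sum]
  ring

lemma isHomogeneousSymbol_of_eq_sum_monomial {n m : ℕ} {W : Set (Zsp n)}
    {a : ((Fin n → Fin (m + 1)) × Fin (m + 1)) → Zsp n → ℂ} (ha : ∀ α, ContDiffOn ℝ 1 (a α) W)
    {L : Zsp n → (Fin n → ℂ) × ℂ → ℂ}
    (hL : ∀ z ζ, L z ζ =
      ∑ α ∈ Finset.univ.filter
          (fun α : (Fin n → Fin (m + 1)) × Fin (m + 1) =>
            (∑ j, (α.1 j : ℕ)) + (α.2 : ℕ) = m),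
        a α z * (∏ j, ζ.1 j ^ (α.1 j : ℕ)) * ζ.2 ^ (α.2 : ℕ)) :
    IsHomogeneousSymbol L m W := by
  obtain rfl : L = _ := funext₂ hL
  simp only [mul_assoc]
  refine IsHomogeneousSymbol.sum fun α hα ↦
    isHomogeneousSymbol_mul (ha α) (contDiff_monomial _ _) fun c x ↦ ?_
  rw [monomial_smul, (Finset.mem_filter.1 hα).2]

end Polynomials

theorem stmt19_general {n m : ℕ} {P : Type*} [NormedAddCommGroup P] [NormedSpace ℝ P]
    {W : Set (Zsp n)} (hW : IsOpen W) {K : Set (P × Zsp n)} (hK : IsCompact K)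
    (hKW : MapsTo Prod.snd K W) {L : Zsp n → (Fin n → ℂ) × ℂ → ℂ}
    (hL : IsHomogeneousSymbol L m W) (hsimple : HasSimpleCharacteristics L W)
    {ψ : P → Zsp n → ℝ} (hψ : ContDiff ℝ 2 (uncurry ψ))
    (hgrad : ∀ p z, (p, z) ∈ K → gradZ (ψ p) z ≠ 0) :
    ∃ C > 0, ∃ γ₀ : ℝ, 1 ≤ γ₀ ∧ ∀ τ γ : ℝ, 0 < τ → γ₀ ≤ γ → ∀ p z, (p, z) ∈ K → ∀ ζ : Zsp n,
      C * (znorm ζ ^ 2 + (τ * γ * Real.exp (γ * ψ p z)) ^ 2) ^ m ≤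
        ‖conjugatedSymbol L (ψ p) τ γ (z, ζ)‖ ^ 2 +
          τ * Real.exp (γ * ψ p z) * znorm (gradZ (ψ p) z) ^ 2 *
            pbZ (fun w ↦ (conjugatedSymbol L (ψ p) τ γ w).re)
              (fun w ↦ (conjugatedSymbol L (ψ p) τ γ w).im) (z, ζ) := by
  have hG : ContDiff ℝ 1 (uncurry fun p ↦ gradZ (ψ p)) := contDiff_uncurry_gradZ hψ
  obtain ⟨C, hC, γ₀, hγ₀, h⟩ := exists_pos_mul_norm_pow_le_add_inv_mul hK
    (S := {w : Zsp n × ℝ | 0 ≤ w.2}) (isClosed_le continuous_const continuous_snd)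
    (fun c hc w hw ↦ mul_nonneg hc.le hw) (k := 2 * m)
    (f := fun q w ↦ leadingPart L q.2 (gradZ (ψ q.1) q.2) w)
    (g := fun q w ↦ remainder L q.2 (gradZ (ψ q.1) q.2) (fderiv ℝ (gradZ (ψ q.1)) q.2) w)
    (continuousOn_leadingPart hL hW (fun q hq ↦ hKW hq.1) (by fun_prop)
      (hG.continuous.comp continuous_fst).continuousOn (by fun_prop))
    (continuousOn_remainder hL hW (fun q hq ↦ hKW hq.1) (by fun_prop)
      (hG.continuous.comp continuous_fst).continuousOn
      ((continuous_fderiv_gradZ hψ).comp continuous_fst).continuousOn (by fun_prop))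
    (fun q hq ↦ leadingPart_smul hL hW (hKW hq) _)
    (fun q hq ↦ remainder_smul hL hW (hKW hq) _ _)
    (fun q hq w hw hw₀ ↦ hsimple.leadingPart_pos hL hW (hKW hq) (hgrad _ _ hq) hw₀ hw)
  refine ⟨C / (n + 2) ^ m, by positivity, γ₀, hγ₀, fun τ γ hτ hγ p z hq ζ ↦ ?_⟩
  have hγpos : 0 < γ := by linarith
  have hψp : Differentiable ℝ (ψ p) :=
    (hψ.comp (contDiff_prodMk_right p)).differentiable two_ne_zero
  have hGp : Differentiable ℝ (gradZ (ψ p)) :=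
    (hG.comp (contDiff_prodMk_right p)).differentiable one_ne_zero
  rw [norm_sq_add_mul_pbZ_conjugatedSymbol hL hW (hKW hq) (hψp z) (hGp z) τ hγpos.ne']
  set T := τ * γ * Real.exp (γ * ψ p z)
  have hT : 0 < T := by positivity
  calc C / (n + 2) ^ m * (znorm ζ ^ 2 + T ^ 2) ^ m
      ≤ C / (n + 2) ^ m * ((n + 2) * ‖(ζ, T)‖ ^ 2) ^ m := by
        gcongr
        exact znorm_sq_add_sq_le (ζ, T)
    _ = C * ‖(ζ, T)‖ ^ (2 * m) := by
        rw [mul_pow, ← pow_mul]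
        field_simp
    _ ≤ _ := h γ hγ (p, z) hq (ζ, T) hT.le fun h ↦ hT.ne' (congrArg Prod.snd h)

/-- Sub-ellipticity quantification: if the homogeneous symbol `ℓ` of degree `m` satisfies the
simple-characteristic property in every direction on `W ⊇ V̄`, then for `γ` large,
`|ℓ(z, ζ + iτ̂)|² + τφ|∇ψ_ε|² {Re ℓ_φ, Im ℓ_φ} ≥ C (|ζ|² + (τγφ)²)^m` on `V̄`, uniformly in
`τ ≥ 1`, `γ ≥ γ₀`, `ε ∈ [0,1]`, where `τ̂ = τγφ∇ψ_ε` and `φ = exp(γψ_ε)`. -/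
theorem stmt19 (n m : ℕ) (hm : 1 ≤ m)
    (V W : Set (Zsp n)) (hV : IsOpen V) (hVbd : Bornology.IsBounded V)
    (hW : IsOpen W) (hVW : closure V ⊆ W)
    (a : ((Fin n → Fin (m + 1)) × Fin (m + 1)) → Zsp n → ℂ)
    (ha : ∀ α, ContDiffOn ℝ (⊤ : ℕ∞) (a α) W)
    (L : Zsp n → ((Fin n → ℂ) × ℂ) → ℂ)
    (hL : ∀ z ζ, L z ζ =
      ∑ α ∈ Finset.univ.filter
          (fun α : (Fin n → Fin (m + 1)) × Fin (m + 1) =>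
            (∑ j, (α.1 j : ℕ)) + (α.2 : ℕ) = m),
        a α z * (∏ j, ζ.1 j ^ (α.1 j : ℕ)) * ζ.2 ^ (α.2 : ℕ))
    (hsimple : ∀ M : Zsp n, M ≠ 0 → ∀ z ∈ W, ∀ ζ : Zsp n, ∀ θ : ℝ, 0 ≤ θ →
      L z (cplx ζ + ((θ : ℂ) * Complex.I) • cplx M) = 0 →
      deriv (fun t : ℂ =>
        L z (cplx ζ + ((θ : ℂ) * Complex.I) • cplx M + t • cplx M)) 0 = 0 →
      ζ = 0 ∧ θ = 0)
    (ψ : Zsp n → ℝ) (hψ : ContDiff ℝ (⊤ : ℕ∞) ψ)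
    (c₀ : ℝ) (hc₀ : 0 < c₀) (hψpos : ∀ z, c₀ ≤ ψ z)
    (hbdd : ∀ k : ℕ, 1 ≤ k → ∃ Mb : ℝ, ∀ z, ‖iteratedFDeriv ℝ k ψ z‖ ≤ Mb)
    (c₁ : ℝ) (hc₁ : 0 < c₁)
    (hgrad : ∀ ε : ℝ, 0 ≤ ε → ε ≤ 1 →
      ∀ z ∈ closure V, c₁ ≤ znorm (gradZ (psiEps ψ ε) z)) :
    ∃ C > 0, ∃ γ₀ : ℝ, 1 ≤ γ₀ ∧
      ∀ τ γ ε : ℝ, 1 ≤ τ → γ₀ ≤ γ → 0 ≤ ε → ε ≤ 1 →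
      ∀ z ∈ closure V, ∀ ζ : Zsp n,
        C * (((∑ j, (ζ.1 j) ^ 2) + ζ.2 ^ 2 +
            (τ * γ * Real.exp (γ * psiEps ψ ε z)) ^ 2)) ^ m ≤
          ‖L z (cplx ζ + Complex.I • cplx
              ((τ * γ * Real.exp (γ * psiEps ψ ε z)) • gradZ (psiEps ψ ε) z))‖ ^ 2 +
          τ * Real.exp (γ * psiEps ψ ε z) * (znorm (gradZ (psiEps ψ ε) z)) ^ 2 *
            pbZ
              (fun w => (L w.1 (cplx w.2 + Complex.I • cplx
                ((τ * γ * Real.exp (γ * psiEps ψ ε w.1)) •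
                  gradZ (psiEps ψ ε) w.1))).re)
              (fun w => (L w.1 (cplx w.2 + Complex.I • cplx
                ((τ * γ * Real.exp (γ * psiEps ψ ε w.1)) •
                  gradZ (psiEps ψ ε) w.1))).im)
              (z, ζ) := by
  obtain ⟨C, hC, γ₀, hγ₀, h⟩ := stmt19_general hW (isCompact_Icc.prod hVbd.isCompact_closure)
    (fun _ hq ↦ hVW hq.2)
    (isHomogeneousSymbol_of_eq_sum_monomial (fun α ↦ (ha α).of_le (mod_cast le_top)) hL) hsimple
    (contDiff_uncurry_psiEps (contDiff_infty.1 hψ 2))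
    fun ε z hq hzero ↦ hc₁.not_ge (by simpa [hzero, znorm_zero] using hgrad ε hq.1.1 hq.1.2 z hq.2)
  refine ⟨C, hC, γ₀, hγ₀, fun τ γ ε hτ hγ hε₀ hε₁ z hz ζ ↦ ?_⟩
  rw [← znorm_sq ζ]
  exact h τ γ (by linarith) hγ ε z ⟨⟨hε₀, hε₁⟩, hz⟩ ζ
end
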